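/- There exists a 3-way cutting scheme whose maximum separation density is at most 12/11: there exist a probability space (Ω, 𝒜, μ) and a map c : Ω → (Δ_3 → {1,2,3}) with c(ω)(e_i) = i for every ω and every i ∈ {1,2,3}, such that for all x, y ∈ Δ_3 the set {ω : c(ω)(x) ≠ c(ω)(y)} is measurable and μ{ω : c(ω)(x) ≠ c(ω)(y)} ≤ (12/11)·(1/2)·∑_{i=1}^3 |x_i − y_i|. -/

import Mathlib

open MeasureTheory

namespace ThreeCut

noncomputable def th1 (t : ℝ) : ℝ := if t < 1/3 then t + 1/3 else if t < 2/3 then t - 1/3 else t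
noncomputable def th2 (t : ℝ) : ℝ :=
  if t < 1/3 then 2/3 - 2*t else if t < 2/3 then 4/3 - 2*t else t

lemma meas_th1 : Measurable th1 := by
  unfold th1
  refine Measurable.ite measurableSet_Iio (by fun_prop) (Measurable.ite measurableSet_Iio (by fun_prop) (by fun_prop))
lemma meas_th2 : Measurable th2 := by
  unfold th2
  refine Measurable.ite measurableSet_Iio (by fun_prop) (Measurable.ite measurableSet_Iio (by fun_prop) (by fun_prop))

open Classical in
noncomputable def lab (k : Fin 5) (t : ℝ) (x : Fin 3 → ℝ) : Fin 3 :=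
  if k = 0 then (if t < x 0 then 0 else if th1 t < x 1 then 1 else 2)
  else if k = 1 then (if th2 t ≤ x 2 then 2 else if th1 t < x 1 then 1 else 0)
  else if t < x 0 then 0 else if th1 t < x 1 then 1 else if th2 t ≤ x 2 then 2
  else if k = 2 then 0 else if k = 3 then 1 else 2

lemma meas_lab (k : Fin 5) (x : Fin 3 → ℝ) : Measurable (fun t => lab k t x) := by
  have h0 : MeasurableSet {t : ℝ | t < x 0} := measurableSet_Iio
  have h1 : MeasurableSet {t : ℝ | th1 t < x 1} := measurableSet_lt meas_th1 measurable_const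
  have h2 : MeasurableSet {t : ℝ | th2 t ≤ x 2} := measurableSet_le meas_th2 measurable_const
  unfold lab
  by_cases k0 : k = 0
  · simp only [k0, if_true]
    exact Measurable.ite h0 measurable_const (Measurable.ite h1 measurable_const measurable_const)
  by_cases k1 : k = 1
  · simp only [k1, if_true, if_false, one_ne_zero]
    exact Measurable.ite h2 measurable_const (Measurable.ite h1 measurable_const measurable_const)
  simp only [k0, k1, if_false]
  exact Measurable.ite h0 measurable_const (Measurable.ite h1 measurable_const
    (Measurable.ite h2 measurable_const measurable_const))

/-- range of parameter for the given kind of cut -/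
def J (k : Fin 5) : Set ℝ := if k = 0 ∨ k = 1 then Set.Ico 0 (2/3) else Set.Ico (2/3) 1

lemma meas_J (k : Fin 5) : MeasurableSet (J k) := by
  unfold J; split_ifs <;> exact measurableSet_Ico

open Classical in
noncomputable def clip (k : Fin 5) (t : ℝ) : ℝ :=
  if t ∈ J k then t else if k = 0 ∨ k = 1 then 0 else 2/3

lemma meas_clip (k : Fin 5) : Measurable (clip k) := by
  unfold clip
  exact Measurable.ite (meas_J k) measurable_id measurable_const

lemma clip_mem (k : Fin 5) (t : ℝ) : clip k t ∈ J k := by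
  unfold clip
  split_ifs with h h'
  · exact h
  · simp [J, h']
  · simp only [J, h', if_false, Set.mem_Ico]; norm_num

lemma lab_single (k : Fin 5) (t : ℝ) (ht : t ∈ J k) (i : Fin 3) :
    lab k t (Pi.single i 1) = i := by
  unfold J at ht
  unfold lab th1 th2
  fin_cases k <;> simp at ht <;> fin_cases i <;> simp <;> grind

def F0 (x y : Fin 3 → ℝ) : Set ℝ := {t | ¬ (t < x 0 ↔ t < y 0)}
def F1 (x y : Fin 3 → ℝ) : Set ℝ := {t | ¬ (th1 t < x 1 ↔ th1 t < y 1)}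
def F2 (x y : Fin 3 → ℝ) : Set ℝ := {t | ¬ (th2 t ≤ x 2 ↔ th2 t ≤ y 2)}

lemma meas_F0 (x y : Fin 3 → ℝ) : MeasurableSet (F0 x y) :=
  ((measurableSet_lt measurable_id measurable_const).iff
    (measurableSet_lt measurable_id measurable_const)).compl
lemma meas_F1 (x y : Fin 3 → ℝ) : MeasurableSet (F1 x y) :=
  ((measurableSet_lt meas_th1 measurable_const).iff
    (measurableSet_lt meas_th1 measurable_const)).compl
lemma meas_F2 (x y : Fin 3 → ℝ) : MeasurableSet (F2 x y) :=
  ((measurableSet_le meas_th2 measurable_const).iff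
    (measurableSet_le meas_th2 measurable_const)).compl

def S (x y : Fin 3 → ℝ) (k : Fin 5) : Set ℝ := {t | lab k t x ≠ lab k t y}

lemma meas_S (x y : Fin 3 → ℝ) (k : Fin 5) : MeasurableSet (S x y k) :=
  (measurableSet_eq_fun (meas_lab k x) (meas_lab k y)).compl

lemma th_sum (t : ℝ) (h : t < 2/3) : t + th1 t + th2 t = 1 := by
  unfold th1 th2; split_ifs <;> linarith

lemma ball_pt (x y : Fin 3 → ℝ) (hx : x 0 + x 1 + x 2 = 1) (hy : y 0 + y 1 + y 2 = 1)
    (t : ℝ) (ht : t < 2/3) :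
    (S x y 0).indicator (1 : ℝ → ENNReal) t + (S x y 1).indicator 1 t ≤
      (F0 x y).indicator 1 t + (F1 x y).indicator 1 t + (F2 x y).indicator 1 t := by
  have hs := th_sum t ht
  have e1 : ¬ (t < x 0 ∧ th1 t < x 1 ∧ th2 t ≤ x 2) := by rintro ⟨a, b, c⟩; linarith
  have e2 : ¬ (t < y 0 ∧ th1 t < y 1 ∧ th2 t ≤ y 2) := by rintro ⟨a, b, c⟩; linarith
  have e3 : t < x 0 ∨ th1 t < x 1 ∨ th2 t ≤ x 2 := by by_contra! h; linarith [h.1, h.2.1, h.2.2]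
  have e4 : t < y 0 ∨ th1 t < y 1 ∨ th2 t ≤ y 2 := by by_contra! h; linarith [h.1, h.2.1, h.2.2]
  simp only [Set.indicator_apply, S, F0, F1, F2, Set.mem_ofPred_eq, lab]
  by_cases a0 : t < x 0 <;> by_cases a1 : th1 t < x 1 <;> by_cases a2 : th2 t ≤ x 2 <;>
  by_cases b0 : t < y 0 <;> by_cases b1 : th1 t < y 1 <;> by_cases b2 : th2 t ≤ y 2 <;>
  simp [a0, a1, a2, b0, b1, b2] at e1 e2 e3 e4 ⊢

lemma corner_pt (x y : Fin 3 → ℝ) (hx : x 0 + x 1 + x 2 = 1) (hy : y 0 + y 1 + y 2 = 1)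
    (px : ∀ i, 0 ≤ x i) (py : ∀ i, 0 ≤ y i)
    (t : ℝ) (ht : 2/3 ≤ t) :
    (S x y 2).indicator (1 : ℝ → ENNReal) t + (S x y 3).indicator 1 t + (S x y 4).indicator 1 t ≤
      2 * ((F0 x y).indicator 1 t + (F1 x y).indicator 1 t + (F2 x y).indicator 1 t) := by
  have h1 : th1 t = t := by unfold th1; split_ifs <;> linarith
  have h2 : th2 t = t := by unfold th2; split_ifs <;> linarith
  have e1 := px 0
  have e2 := px 1
  have e3 := px 2
  have e4 := py 0
  have e5 := py 1
  have e6 := py 2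
  simp only [Set.indicator_apply, S, F0, F1, F2, Set.mem_ofPred_eq, lab, h1, h2]
  have two : (1 : ENNReal) + 1 + 1 ≤ 2 * (1 + 1) := by norm_num
  have two' : (1 : ENNReal) + 1 ≤ 2  := by norm_num
  by_cases a0 : t < x 0 <;> by_cases a1 : t < x 1 <;> by_cases a2 : t ≤ x 2 <;>
  by_cases b0 : t < y 0 <;> by_cases b1 : t < y 1 <;> by_cases b2 : t ≤ y 2 <;>
  first
  | (exfalso; linarith)
  | (simp [a0, a1, a2, b0, b1, b2]; done)
  | (simpa [a0, a1, a2, b0, b1, b2] using two)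
  | (simpa [a0, a1, a2, b0, b1, b2] using two')

noncomputable def cl (p q z : ℝ) : ℝ := max p (min q z)

lemma vol_piece (E : Set ℝ) (p q a b m : ℝ) (hpq : p ≤ q) (hm : 0 < m) (hab : a ≤ b)
    (s r : ℝ) (hs : s = m ∨ s = -m)
    (h : ∀ t ∈ E, s * t + r ∈ Set.Icc a b ∧ s * t + r ∈ Set.Icc p q) :
    volume E ≤ ENNReal.ofReal ((cl p q b - cl p q a) / m) := by
  have key : min b q - max a p ≤ cl p q b - cl p q a := by
    unfold cl; grind
  have key2 : (min b q - max a p) / m ≤ (cl p q b - cl p q a) / m := by gcongr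
  rcases hs with rfl | rfl
  · have : E ⊆ Set.Icc ((max a p - r) / s) ((min b q - r) / s) := by
      intro t ht
      obtain ⟨⟨h1, h2⟩, h3, h4⟩ := h t ht
      constructor
      · rw [div_le_iff₀ hm]; have := max_le h1 h3; linarith
      · rw [le_div_iff₀ hm]; have := le_min h2 h4; linarith
    refine (measure_mono this).trans ?_
    rw [Real.volume_Icc]
    apply ENNReal.ofReal_le_ofReal
    refine le_trans (le_of_eq ?_) key2
    ring
  · have : E ⊆ Set.Icc ((r - min b q) / m) ((r - max a p) / m) := by
      intro t ht
      obtain ⟨⟨h1, h2⟩, h3, h4⟩ := h t ht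
      constructor
      · rw [div_le_iff₀ hm]; have := le_min h2 h4; linarith
      · rw [le_div_iff₀ hm]; have := max_le h1 h3; linarith
    refine (measure_mono this).trans ?_
    rw [Real.volume_Icc]
    apply ENNReal.ofReal_le_ofReal
    refine le_trans (le_of_eq ?_) key2
    ring

lemma cl_mono (p q a b : ℝ) (h : a ≤ b) : 0 ≤ cl p q b - cl p q a := by
  unfold cl; grind

lemma cl_lip (p q a b : ℝ) (h : a ≤ b) : cl p q b - cl p q a ≤ b - a := by
  unfold cl; grind

lemma cl_add (p q r z : ℝ) (h : p ≤ q) (h' : q ≤ r) : cl p q z + cl q r z = q + cl p r z := by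
  unfold cl
  rcases le_total z q with hz | hz
  · rw [min_eq_right hz, min_eq_right (hz.trans h'), max_eq_left hz]; ring
  · rw [min_eq_left hz, max_eq_right h, max_eq_right (le_min h' hz),
      max_eq_right (h.trans (le_min h' hz))]

lemma vol_F (E : Set ℝ) (x y : ℝ) (th : ℝ → ℝ)
    (h : ∀ t ∈ E, min x y ≤ th t ∧ th t ≤ max x y)
    (hth : th = id ∨ th = th1 ∨ th = th2) :
    volume (E ∩ Set.Ico 0 (2/3)) + volume (E ∩ Set.Ico (2/3) 1) ≤ ENNReal.ofReal |x - y| := by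
  set a := min x y
  set b := max x y
  have hab : a ≤ b := min_le_max
  have hd : |x - y| = b - a := by simp only [a, b]; grind
  have split : volume (E ∩ Set.Ico 0 (2/3)) ≤
      volume (E ∩ Set.Ico 0 (1/3)) + volume (E ∩ Set.Ico (1/3) (2/3)) := by
    refine le_trans (measure_mono ?_) (measure_union_le _ _)
    intro t ⟨h1, h2, h3⟩
    by_cases h4 : t < 1/3
    · exact Or.inl ⟨h1, h2, h4⟩
    · exact Or.inr ⟨h1, not_lt.mp h4, h3⟩
  have P3 : volume (E ∩ Set.Ico (2/3) 1) ≤ ENNReal.ofReal ((cl (2/3) 1 b - cl (2/3) 1 a) / 1) := by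
    refine vol_piece _ _ _ _ _ 1 (by norm_num) (by norm_num) hab 1 0 (Or.inl rfl) ?_
    rintro t ⟨h1, h2, h3⟩
    have h4 := h t h1
    have : th t = t := by
      rcases hth with rfl | rfl | rfl
      · rfl
      · unfold th1; split_ifs <;> linarith
      · unfold th2; split_ifs <;> linarith
    rw [this] at h4
    simp only [one_mul, add_zero]
    exact ⟨h4, h2, h3.le⟩
  rw [hd]
  rcases hth with rfl | rfl | rfl
  · have P1 : volume (E ∩ Set.Ico 0 (1/3)) ≤ ENNReal.ofReal ((cl 0 (1/3) b - cl 0 (1/3) a) / 1) := by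
      refine vol_piece _ _ _ _ _ 1 (by norm_num) (by norm_num) hab 1 0 (Or.inl rfl) ?_
      rintro t ⟨h1, h2, h3⟩
      have h4 := h t h1
      simp only [id] at h4
      simp only [one_mul, add_zero]
      exact ⟨h4, h2, h3.le⟩
    have P2 : volume (E ∩ Set.Ico (1/3) (2/3)) ≤
        ENNReal.ofReal ((cl (1/3) (2/3) b - cl (1/3) (2/3) a) / 1) := by
      refine vol_piece _ _ _ _ _ 1 (by norm_num) (by norm_num) hab 1 0 (Or.inl rfl) ?_
      rintro t ⟨h1, h2, h3⟩
      have h4 := h t h1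
      simp only [id] at h4
      simp only [one_mul, add_zero]
      exact ⟨h4, h2, h3.le⟩
    refine (add_le_add (split.trans (add_le_add P1 P2)) P3).trans ?_
    have q1 := cl_mono 0 (1/3) a b hab
    have q2 := cl_mono (1/3) (2/3) a b hab
    have q3 := cl_mono (2/3) 1 a b hab
    rw [← ENNReal.ofReal_add (by linarith) (by linarith),
      ← ENNReal.ofReal_add (by linarith) (by linarith)]
    apply ENNReal.ofReal_le_ofReal
    have A1 := cl_add 0 (1/3) (2/3) a (by norm_num) (by norm_num)
    have A2 := cl_add 0 (2/3) 1 a (by norm_num) (by norm_num)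
    have A3 := cl_add 0 (1/3) (2/3) b (by norm_num) (by norm_num)
    have A4 := cl_add 0 (2/3) 1 b (by norm_num) (by norm_num)
    have A5 := cl_lip 0 1 a b hab
    linarith
  · have P1 : volume (E ∩ Set.Ico 0 (1/3)) ≤
        ENNReal.ofReal ((cl (1/3) (2/3) b - cl (1/3) (2/3) a) / 1) := by
      refine vol_piece _ _ _ _ _ 1 (by norm_num) (by norm_num) hab 1 (1/3) (Or.inl rfl) ?_
      rintro t ⟨h1, h2, h3⟩
      have h4 := h t h1
      simp only [th1, h3, if_true] at h4
      simp only [one_mul]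
      exact ⟨h4, by linarith, by linarith⟩
    have P2 : volume (E ∩ Set.Ico (1/3) (2/3)) ≤
        ENNReal.ofReal ((cl 0 (1/3) b - cl 0 (1/3) a) / 1) := by
      refine vol_piece _ _ _ _ _ 1 (by norm_num) (by norm_num) hab 1 (-(1/3)) (Or.inl rfl) ?_
      rintro t ⟨h1, h2, h3⟩
      have h4 := h t h1
      simp only [th1, h3, if_true, not_lt.mpr h2, if_false] at h4
      simp only [one_mul]
      exact ⟨h4, by linarith, by linarith⟩
    refine (add_le_add (split.trans (add_le_add P1 P2)) P3).trans ?_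
    have q1 := cl_mono 0 (1/3) a b hab
    have q2 := cl_mono (1/3) (2/3) a b hab
    have q3 := cl_mono (2/3) 1 a b hab
    rw [← ENNReal.ofReal_add (by linarith) (by linarith),
      ← ENNReal.ofReal_add (by linarith) (by linarith)]
    apply ENNReal.ofReal_le_ofReal
    have A1 := cl_add 0 (1/3) (2/3) a (by norm_num) (by norm_num)
    have A2 := cl_add 0 (2/3) 1 a (by norm_num) (by norm_num)
    have A3 := cl_add 0 (1/3) (2/3) b (by norm_num) (by norm_num)
    have A4 := cl_add 0 (2/3) 1 b (by norm_num) (by norm_num)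
    have A5 := cl_lip 0 1 a b hab
    linarith
  · have P1 : volume (E ∩ Set.Ico 0 (1/3)) ≤
        ENNReal.ofReal ((cl 0 (2/3) b - cl 0 (2/3) a) / 2) := by
      refine vol_piece _ _ _ _ _ 2 (by norm_num) (by norm_num) hab (-2) (2/3) (Or.inr rfl) ?_
      rintro t ⟨h1, h2, h3⟩
      have h4 := h t h1
      simp only [th2, h3, if_true] at h4
      exact ⟨⟨by linarith, by linarith⟩, by linarith, by linarith⟩
    have P2 : volume (E ∩ Set.Ico (1/3) (2/3)) ≤
        ENNReal.ofReal ((cl 0 (2/3) b - cl 0 (2/3) a) / 2) := by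
      refine vol_piece _ _ _ _ _ 2 (by norm_num) (by norm_num) hab (-2) (4/3) (Or.inr rfl) ?_
      rintro t ⟨h1, h2, h3⟩
      have h4 := h t h1
      simp only [th2, h3, if_true, not_lt.mpr h2, if_false] at h4
      exact ⟨⟨by linarith, by linarith⟩, by linarith, by linarith⟩
    refine (add_le_add (split.trans (add_le_add P1 P2)) P3).trans ?_
    have q1 := cl_mono 0 (2/3) a b hab
    have q3 := cl_mono (2/3) 1 a b hab
    rw [← ENNReal.ofReal_add (by linarith) (by linarith),
      ← ENNReal.ofReal_add (by linarith) (by linarith)]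
    apply ENNReal.ofReal_le_ofReal
    have A1 := cl_add 0 (1/3) (2/3) a (by norm_num) (by norm_num)
    have A2 := cl_add 0 (2/3) 1 a (by norm_num) (by norm_num)
    have A3 := cl_add 0 (1/3) (2/3) b (by norm_num) (by norm_num)
    have A4 := cl_add 0 (2/3) 1 b (by norm_num) (by norm_num)
    have A5 := cl_lip 0 1 a b hab
    linarith

lemma ball_vol (x y : Fin 3 → ℝ) (hx : x 0 + x 1 + x 2 = 1) (hy : y 0 + y 1 + y 2 = 1) :
    volume (S x y 0 ∩ Set.Ico 0 (2/3)) + volume (S x y 1 ∩ Set.Ico 0 (2/3)) ≤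
    volume (F0 x y ∩ Set.Ico 0 (2/3)) + volume (F1 x y ∩ Set.Ico 0 (2/3))
      + volume (F2 x y ∩ Set.Ico 0 (2/3)) := by
  have hm := setLIntegral_mono' (μ := volume) (measurableSet_Ico (a := (0:ℝ)) (b := 2/3))
    (fun t ht => ball_pt x y hx hy t ht.2)
  have mS := meas_S x y
  have m0 := meas_F0 x y
  have m1 := meas_F1 x y
  have m2 := meas_F2 x y
  have M : ∀ {s : Set ℝ}, MeasurableSet s → Measurable (s.indicator (1 : ℝ → ENNReal)) :=
    fun h => measurable_one.indicator h
  rw [lintegral_add_left (M (mS 0)), lintegral_add_right _ (M m2),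
    lintegral_add_left (M m0), lintegral_indicator_one (mS 0), lintegral_indicator_one (mS 1),
    lintegral_indicator_one m0, lintegral_indicator_one m1, lintegral_indicator_one m2,
    Measure.restrict_apply (mS 0), Measure.restrict_apply (mS 1), Measure.restrict_apply m0,
    Measure.restrict_apply m1, Measure.restrict_apply m2] at hm
  exact hm

lemma corner_vol (x y : Fin 3 → ℝ) (hx : x 0 + x 1 + x 2 = 1) (hy : y 0 + y 1 + y 2 = 1)
    (px : ∀ i, 0 ≤ x i) (py : ∀ i, 0 ≤ y i) :
    volume (S x y 2 ∩ Set.Ico (2/3) 1) + volume (S x y 3 ∩ Set.Ico (2/3) 1)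
      + volume (S x y 4 ∩ Set.Ico (2/3) 1) ≤
    2 * (volume (F0 x y ∩ Set.Ico (2/3) 1) + volume (F1 x y ∩ Set.Ico (2/3) 1)
      + volume (F2 x y ∩ Set.Ico (2/3) 1)) := by
  have hm := setLIntegral_mono' (μ := volume) (measurableSet_Ico (a := (2/3:ℝ)) (b := 1))
    (fun t ht => corner_pt x y hx hy px py t ht.1)
  have mS := meas_S x y
  have m0 := meas_F0 x y
  have m1 := meas_F1 x y
  have m2 := meas_F2 x y
  have M : ∀ {s : Set ℝ}, MeasurableSet s → Measurable (s.indicator (1 : ℝ → ENNReal)) :=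
    fun h => measurable_one.indicator h
  rw [lintegral_add_right _ (M (mS 4)), lintegral_add_left (M (mS 2)),
    lintegral_const_mul' _ _ (by simp),
    lintegral_add_right _ (M m2),
    lintegral_add_left (M m0), lintegral_indicator_one (mS 2), lintegral_indicator_one (mS 3),
    lintegral_indicator_one (mS 4),
    lintegral_indicator_one m0, lintegral_indicator_one m1, lintegral_indicator_one m2,
    Measure.restrict_apply (mS 2), Measure.restrict_apply (mS 3), Measure.restrict_apply (mS 4),
    Measure.restrict_apply m0,
    Measure.restrict_apply m1, Measure.restrict_apply m2] at hm
  exact hm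

noncomputable def wt (k : Fin 5) : ℝ := if k = 0 ∨ k = 1 then 6/11 else 3/11

noncomputable def mu : Measure (Fin 5 × ℝ) :=
  ∑ k : Fin 5, ENNReal.ofReal (wt k) • (volume.restrict (J k)).map (Prod.mk k)

lemma mu_apply (A : Set (Fin 5 × ℝ)) (hA : MeasurableSet A) :
    mu A = ∑ k : Fin 5, ENNReal.ofReal (wt k) * volume ((Prod.mk k ⁻¹' A) ∩ J k) := by
  unfold mu
  simp only [Measure.finsetSum_apply, Measure.smul_apply, smul_eq_mul]
  refine Finset.sum_congr rfl fun k _ => ?_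
  rw [Measure.map_apply measurable_prodMk_left hA,
    Measure.restrict_apply (measurable_prodMk_left hA)]

instance : IsProbabilityMeasure mu := by
  constructor
  rw [mu_apply _ MeasurableSet.univ]
  simp only [Fin.sum_univ_five, wt, J, Set.preimage_univ, Set.univ_inter]
  simp
  repeat rw [← ENNReal.ofReal_mul (by norm_num)]
  repeat rw [← ENNReal.ofReal_add (by norm_num) (by norm_num)]
  norm_num

noncomputable def c (w : Fin 5 × ℝ) (x : Fin 3 → ℝ) : Fin 3 := lab w.1 (clip w.1 w.2) x

lemma meas_c (x : Fin 3 → ℝ) : Measurable (fun w => c w x) := by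
  apply measurable_from_prod_countable_right
  intro k
  exact (meas_lab k x).comp (meas_clip k)

lemma sep_inter (x y : Fin 3 → ℝ) (k : Fin 5) :
    (Prod.mk k ⁻¹' {w | c w x ≠ c w y}) ∩ J k = S x y k ∩ J k := by
  ext t
  simp only [Set.mem_inter_iff, Set.mem_preimage, Set.mem_ofPred_eq, c, S]
  refine and_congr_left fun h => ?_
  have : clip k t = t := by unfold clip; rw [if_pos h]
  rw [this]

end ThreeCut

/-- There exists a 3-way cutting scheme whose maximum separation density is
at most `12/11`. -/
theorem exists_three_way_cutting_scheme_density_le :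
    ∃ (Ω : Type) (_ : MeasurableSpace Ω) (μ : Measure Ω) (_ : IsProbabilityMeasure μ)
      (c : Ω → (Fin 3 → ℝ) → Fin 3),
      (∀ ω : Ω, ∀ i : Fin 3, c ω (Pi.single i 1) = i) ∧
      (∀ x ∈ stdSimplex ℝ (Fin 3), ∀ y ∈ stdSimplex ℝ (Fin 3),
        MeasurableSet {ω : Ω | c ω x ≠ c ω y} ∧
        (μ {ω : Ω | c ω x ≠ c ω y}).toReal ≤ (12 / 11) * ((1 / 2) * ∑ i, |x i - y i|)) := by
  refine ⟨Fin 5 × ℝ, inferInstance, ThreeCut.mu, inferInstance, ThreeCut.c, ?_, ?_⟩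
  · intro w i
    exact ThreeCut.lab_single _ _ (ThreeCut.clip_mem _ _) i
  intro x hx y hy
  have hmeas : MeasurableSet {w | ThreeCut.c w x ≠ ThreeCut.c w y} :=
    (measurableSet_eq_fun (ThreeCut.meas_c x) (ThreeCut.meas_c y)).compl
  refine ⟨hmeas, ?_⟩
  apply ENNReal.toReal_le_of_le_ofReal (by positivity)
  rw [ThreeCut.mu_apply _ hmeas]
  simp only [ThreeCut.sep_inter]
  have hx1 : x 0 + x 1 + x 2 = 1 := by rw [← Fin.sum_univ_three]; exact hx.2
  have hy1 : y 0 + y 1 + y 2 = 1 := by rw [← Fin.sum_univ_three]; exact hy.2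
  have B := ThreeCut.ball_vol x y hx1 hy1
  have C := ThreeCut.corner_vol x y hx1 hy1 hx.1 hy.1
  have V0 := ThreeCut.vol_F (ThreeCut.F0 x y) (x 0) (y 0) id (by
    intro t ht; simp only [ThreeCut.F0, Set.mem_ofPred_eq] at ht; simp only [id]; grind) (by simp)
  have V1 := ThreeCut.vol_F (ThreeCut.F1 x y) (x 1) (y 1) ThreeCut.th1 (by
    intro t ht; simp only [ThreeCut.F1, Set.mem_ofPred_eq] at ht; grind) (by simp)
  have V2 := ThreeCut.vol_F (ThreeCut.F2 x y) (x 2) (y 2) ThreeCut.th2 (by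
    intro t ht; simp only [ThreeCut.F2, Set.mem_ofPred_eq] at ht; grind) (by simp)
  have h63 : ENNReal.ofReal (6/11) = ENNReal.ofReal (3/11) * 2 := by
    rw [show (2 : ENNReal) = ENNReal.ofReal 2 by simp, ← ENNReal.ofReal_mul (by norm_num)]
    norm_num
  simp only [Fin.sum_univ_five, Fin.sum_univ_three, ThreeCut.wt, ThreeCut.J]
  simp only [Fin.reduceEq, true_or, or_true, or_self, if_true, if_false]
  calc _ = ENNReal.ofReal (6/11) * (volume (ThreeCut.S x y 0 ∩ Set.Ico 0 (2/3))
            + volume (ThreeCut.S x y 1 ∩ Set.Ico 0 (2/3)))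
          + ENNReal.ofReal (3/11) * (volume (ThreeCut.S x y 2 ∩ Set.Ico (2/3) 1)
            + volume (ThreeCut.S x y 3 ∩ Set.Ico (2/3) 1)
            + volume (ThreeCut.S x y 4 ∩ Set.Ico (2/3) 1)) := by ring
    _ ≤ _ := add_le_add (mul_le_mul_right B _) (mul_le_mul_right C _)
    _ = ENNReal.ofReal (6/11) * (
          (volume (ThreeCut.F0 x y ∩ Set.Ico 0 (2/3)) + volume (ThreeCut.F0 x y ∩ Set.Ico (2/3) 1))
        + (volume (ThreeCut.F1 x y ∩ Set.Ico 0 (2/3)) + volume (ThreeCut.F1 x y ∩ Set.Ico (2/3) 1))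
        + (volume (ThreeCut.F2 x y ∩ Set.Ico 0 (2/3)) + volume (ThreeCut.F2 x y ∩ Set.Ico (2/3) 1))
        ) := by rw [h63]; ring
    _ ≤ ENNReal.ofReal (6/11) * (ENNReal.ofReal |x 0 - y 0| + ENNReal.ofReal |x 1 - y 1|
        + ENNReal.ofReal |x 2 - y 2|) :=
        mul_le_mul_right (add_le_add (add_le_add V0 V1) V2) _
    _ = _ := by
        rw [← ENNReal.ofReal_add (by positivity) (by positivity),
          ← ENNReal.ofReal_add (by positivity) (by positivity),
          ← ENNReal.ofReal_mul (by norm_num)]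
        congr 1
        ring
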